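/- Let K = C_{(13,3)}(4₁) be the (13,3)-cable of the figure-eight knot, with normalized colored Jones polynomial J_{K,n} defined via Habiro's formula and the cabling formula (with r = 13, s = 3). For every integer n ≥ 1, the function ℏ ↦ J_{K,n}(e^{ℏ}) (defined for small real ℏ ≠ 0 by the quotient J̃_{K,n}(e^{ℏ/4})/J̃_{U,n}(e^{ℏ/4}) and extended real-analytically across ℏ = 0) has Taylor expansion at ℏ = 0 equal to J_{K,n}(e^{ℏ}) = 1 + (47 − 47n²)ℏ² + (−624 + 624n²)ℏ³ + (151919/12 − 14605n² + (23341/12)n⁴)ℏ⁴ + (−294528 + 361088n² − 66560n⁴)ℏ⁵ + (2864712407/360 − (122607733/12)n² + (28027787/12)n⁴ − (27314027/360)n⁶)ℏ⁶ + O(ℏ⁷). In particular, the coefficient of ℏ and every ℏ-coefficient up to order 6 is a polynomial in n of degree at most the order of ℏ. -/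

import Mathlib

/-- Habiro's formula for the normalized colored Jones polynomial of the figure-eight knot:
`J_{4₁,m}(q) = Σ_{k=0}^{|m|−1} Π_{j=1}^{k} (q^m + q^{−m} − q^j − q^{−j})`. -/
noncomputable def J41 (q : ℝ) (m : ℤ) : ℝ :=
  ∑ k ∈ Finset.range m.natAbs, ∏ j ∈ Finset.Icc 1 k,
    (q ^ m + q ^ (-m) - q ^ (j : ℤ) - q ^ (-(j : ℤ)))

/-- The unnormalized colored Jones polynomial of the figure-eight knot (with `t⁴ = q`):
`J̃_{4₁,m}(t) = ((t^{2m} − t^{−2m})/(t² − t^{−2})) · J_{4₁,m}(t⁴)`. -/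
noncomputable def Jtilde41 (t : ℝ) (m : ℤ) : ℝ :=
  (t ^ (2 * m) - t ^ (-(2 * m))) / (t ^ (2 : ℤ) - t ^ (-2 : ℤ)) * J41 (t ^ (4 : ℤ)) m

/-- The 0-framed unknot normalization `J̃_{U,n}(t) = (t^{2n} − t^{−2n})/(t² − t^{−2})`. -/
noncomputable def JtildeU (t : ℝ) (n : ℤ) : ℝ :=
  (t ^ (2 * n) - t ^ (-(2 * n))) / (t ^ (2 : ℤ) - t ^ (-2 : ℤ))

/-- The cabling formula for the unnormalized colored Jones polynomial of the
`(r,s)`-cable of the figure-eight knot: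
`J̃_{K,n}(t) = t^{−rs(n²−1)} Σ_w t^{4rw(sw+1)} J̃_{4₁,2sw+1}(t)`, where `w` runs over
`{−(n−1)/2, −(n−1)/2 + 1, …, (n−1)/2}`.  Writing `u = 2w = 2j − (n−1)` for `j = 0, …, n−1`,
the exponent is `4rw(sw+1) = rsu² + 2ru` and the color is `2sw + 1 = su + 1`. -/
noncomputable def JtildeCable (r s : ℤ) (t : ℝ) (n : ℤ) : ℝ :=
  t ^ (-(r * s * (n ^ 2 - 1))) *
    ∑ j ∈ Finset.range n.toNat,
      t ^ (r * s * (2 * (j : ℤ) - (n - 1)) ^ 2 + 2 * r * (2 * (j : ℤ) - (n - 1))) *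
        Jtilde41 t (s * (2 * (j : ℤ) - (n - 1)) + 1)

/-- The normalized colored Jones polynomial of the `(r,s)`-cable of the figure-eight knot,
evaluated at `q = e^ℏ` (that is, `t = e^{ℏ/4}`):
`J_{K,n}(e^ℏ) = J̃_{K,n}(e^{ℏ/4}) / J̃_{U,n}(e^{ℏ/4})`. -/
noncomputable def JCable (r s : ℤ) (n : ℤ) (h : ℝ) : ℝ :=
  JtildeCable r s (Real.exp (h / 4)) n / JtildeU (Real.exp (h / 4)) n

/-!
Each factor of Habiro's formula is even in `ℏ` and divisible by `ℏ²`, so modulo `ℏ⁸` only the first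
four terms of the sum matter, and `J_{4₁,m}(e^ℏ)` is congruent to a polynomial in `ℏ` whose
coefficients are polynomials in `m`. Multiplying `J_{K,n}` by `t^{2n} - t^{-2n}` and clearing the
framing factor turns the claim into an identity, modulo `ℏ⁸`, between the sum over `w` in the
cabling formula and an explicit expression in `n`. The range of `2w` for `n + 2` is the one for `n`
together with `±(n + 1)`, so this identity follows by induction in steps of two from polynomial
identities in `n`, one for each power of `ℏ`. The congruence transfers to the analytic functions
because numerator and denominator are given by convergent power series, and dividing by
`t^{2n} - t^{-2n}`, which has a simple zero at `ℏ = 0`, costs one power of `ℏ`.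
-/

open Filter Topology Asymptotics Finset PowerSeries

section ConvergentPowerSeries

variable {𝕜 : Type*} [NontriviallyNormedField 𝕜]

/-- The formal power series `p` converges to `f` near `0`. It is taken in `𝕜⟦X⟧`, where division and
divisibility by powers of `X` are available, and not as a `FormalMultilinearSeries`. -/
def HasPowerSeriesAtZero (f : 𝕜 → 𝕜) (p : 𝕜⟦X⟧) : Prop :=
  ∀ᶠ z in 𝓝 0, HasSum (fun n ↦ coeff n p * z ^ n) (f z)

variable {f g : 𝕜 → 𝕜} {p q : 𝕜⟦X⟧}

theorem hasPowerSeriesAtZero_iff_hasFPowerSeriesAt :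
    HasPowerSeriesAtZero f p ↔
      HasFPowerSeriesAt f (FormalMultilinearSeries.ofScalars 𝕜 fun n ↦ coeff n p) 0 := by
  simp only [HasPowerSeriesAtZero, hasFPowerSeriesAt_iff, FormalMultilinearSeries.coeff_ofScalars,
    zero_add, smul_eq_mul, mul_comm]

theorem exists_hasPowerSeriesAtZero_of_analyticAt (hf : AnalyticAt 𝕜 f 0) :
    ∃ p, HasPowerSeriesAtZero f p := by
  obtain ⟨P, hP⟩ := hf
  refine ⟨PowerSeries.mk P.coeff, ?_⟩
  simpa only [HasPowerSeriesAtZero, coeff_mk, zero_add, smul_eq_mul, mul_comm]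
    using hasFPowerSeriesAt_iff.1 hP

namespace HasPowerSeriesAtZero

theorem analyticAt (hf : HasPowerSeriesAtZero f p) : AnalyticAt 𝕜 f 0 :=
  (hasPowerSeriesAtZero_iff_hasFPowerSeriesAt.1 hf).analyticAt

theorem unique (hp : HasPowerSeriesAtZero f p) (hq : HasPowerSeriesAtZero f q) : p = q := by
  ext n
  have h := (hasPowerSeriesAtZero_iff_hasFPowerSeriesAt.1 hp).eq_formalMultilinearSeries
    (hasPowerSeriesAtZero_iff_hasFPowerSeriesAt.1 hq)
  simpa only [FormalMultilinearSeries.coeff_ofScalars] using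
    congrArg (FormalMultilinearSeries.coeff · n) h

theorem congr (hf : HasPowerSeriesAtZero f p) (h : f =ᶠ[𝓝 0] g) : HasPowerSeriesAtZero g p := by
  filter_upwards [hf, h] with z hz hfg using hfg ▸ hz

theorem apply_zero (hf : HasPowerSeriesAtZero f p) : f 0 = constantCoeff p := by
  refine hf.self_of_nhds.unique ?_
  simpa using hasSum_single (f := fun n ↦ coeff n p * (0 : 𝕜) ^ n) 0 fun n hn ↦ by simp [hn]

theorem zero : HasPowerSeriesAtZero (fun _ ↦ (0 : 𝕜)) 0 :=
  .of_forall fun z ↦ by simp [hasSum_zero]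

theorem one : HasPowerSeriesAtZero (fun _ ↦ (1 : 𝕜)) 1 :=
  .of_forall fun z ↦ by
    simpa using hasSum_single (f := fun n ↦ coeff n (1 : 𝕜⟦X⟧) * z ^ n) 0
      fun n hn ↦ by simp [coeff_one, hn]

theorem add (hf : HasPowerSeriesAtZero f p) (hg : HasPowerSeriesAtZero g q) :
    HasPowerSeriesAtZero (fun z ↦ f z + g z) (p + q) := by
  filter_upwards [hf, hg] with z hfz hgz
  simpa only [map_add, add_mul] using hfz.add hgz

theorem sub (hf : HasPowerSeriesAtZero f p) (hg : HasPowerSeriesAtZero g q) :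
    HasPowerSeriesAtZero (fun z ↦ f z - g z) (p - q) := by
  filter_upwards [hf, hg] with z hfz hgz
  simpa only [map_sub, sub_mul] using hfz.sub hgz

theorem eventually_summable_norm (hf : HasPowerSeriesAtZero f p) :
    ∀ᶠ z in 𝓝 0, Summable fun n ↦ ‖coeff n p * z ^ n‖ := by
  filter_upwards [Metric.eball_mem_nhds 0
    (hasPowerSeriesAtZero_iff_hasFPowerSeriesAt.1 hf).radius_pos] with z hz
  simpa [FormalMultilinearSeries.ofScalars_apply_eq, mul_comm] using
    FormalMultilinearSeries.summable_norm_apply _ hz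

theorem mul [CompleteSpace 𝕜] (hf : HasPowerSeriesAtZero f p) (hg : HasPowerSeriesAtZero g q) :
    HasPowerSeriesAtZero (fun z ↦ f z * g z) (p * q) := by
  filter_upwards [hf, hg, hf.eventually_summable_norm, hg.eventually_summable_norm]
    with z hfz hgz hpz hqz
  have cauchy (n : ℕ) : coeff n (p * q) * z ^ n =
      ∑ kl ∈ antidiagonal n, coeff kl.1 p * z ^ kl.1 * (coeff kl.2 q * z ^ kl.2) := by
    rw [coeff_mul, sum_mul]
    refine sum_congr rfl fun kl hkl ↦ ?_
    rw [← mem_antidiagonal.1 hkl, pow_add]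
    ring
  simp only [cauchy]
  rw [← hfz.tsum_eq, ← hgz.tsum_eq,
    tsum_mul_tsum_eq_tsum_sum_antidiagonal_of_summable_norm hpz hqz]
  exact (summable_norm_sum_mul_antidiagonal_of_summable_norm hpz hqz).of_norm.hasSum

theorem sum {ι : Type*} (s : Finset ι) {f : ι → 𝕜 → 𝕜} {p : ι → 𝕜⟦X⟧}
    (h : ∀ i ∈ s, HasPowerSeriesAtZero (f i) (p i)) :
    HasPowerSeriesAtZero (fun z ↦ ∑ i ∈ s, f i z) (∑ i ∈ s, p i) := by
  classical
  induction s using Finset.induction_on with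
  | empty => simpa using zero
  | insert i s hi ih =>
    simp only [sum_insert hi]
    exact (h i (mem_insert_self i s)).add (ih fun j hj ↦ h j (mem_insert_of_mem hj))

theorem prod [CompleteSpace 𝕜] {ι : Type*} (s : Finset ι) {f : ι → 𝕜 → 𝕜} {p : ι → 𝕜⟦X⟧}
    (h : ∀ i ∈ s, HasPowerSeriesAtZero (f i) (p i)) :
    HasPowerSeriesAtZero (fun z ↦ ∏ i ∈ s, f i z) (∏ i ∈ s, p i) := by
  classical
  induction s using Finset.induction_on with
  | empty => simpa using one
  | insert i s hi ih =>
    simp only [prod_insert hi]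
    exact (h i (mem_insert_self i s)).mul (ih fun j hj ↦ h j (mem_insert_of_mem hj))

theorem exists_eq_pow_mul {d : ℕ} (hf : HasPowerSeriesAtZero f (X ^ d * p)) :
    ∃ g, HasPowerSeriesAtZero g p ∧ ∀ᶠ z in 𝓝 0, f z = z ^ d * g z := by
  have key : ∀ᶠ z in 𝓝 0, HasSum (fun n ↦ coeff n p * z ^ n) (∑' n, coeff n p * z ^ n) ∧
      f z = z ^ d * ∑' n, coeff n p * z ^ n := by
    filter_upwards [hf] with z hz
    have shifted : HasSum (fun n ↦ z ^ d * (coeff n p * z ^ n)) (f z) := by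
      have low (n : ℕ) (hn : n ∈ range d) : coeff n (X ^ d * p) * z ^ n = 0 := by
        rw [coeff_X_pow_mul', if_neg (by simpa using hn), zero_mul]
      have h := (hasSum_nat_add_iff' d).2 hz
      rw [sum_eq_zero low, sub_zero] at h
      refine h.congr_fun fun n ↦ ?_
      rw [coeff_X_pow_mul, pow_add]
      ring
    have summable : Summable fun n ↦ coeff n p * z ^ n := by
      rcases eq_or_ne z 0 with rfl | hz0
      · exact (hasSum_single 0 fun n hn ↦ by simp [hn]).summable
      · exact (summable_mul_left_iff (pow_ne_zero d hz0)).1 shifted.summable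
    exact ⟨summable.hasSum, shifted.unique (summable.hasSum.mul_left _)⟩
  exact ⟨fun z ↦ ∑' n, coeff n p * z ^ n, key.mono fun _ h ↦ h.1, key.mono fun _ h ↦ h.2⟩

theorem div [CompleteSpace 𝕜] (hf : HasPowerSeriesAtZero f p) (hg : HasPowerSeriesAtZero g q)
    (hq : constantCoeff q ≠ 0) : HasPowerSeriesAtZero (fun z ↦ f z / g z) (p * q⁻¹) := by
  have hg0 : g 0 ≠ 0 := hg.apply_zero ▸ hq
  obtain ⟨r, hr⟩ :=
    exists_hasPowerSeriesAtZero_of_analyticAt (hf.analyticAt.fun_div hg.analyticAt hg0)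
  have hrq : r * q = p := (hr.mul hg).unique <| hf.congr <| by
    filter_upwards [hg.analyticAt.continuousAt.eventually_ne hg0] with z hz
    rw [div_mul_cancel₀ _ hz]
  rwa [(eq_mul_inv_iff_mul_eq hq).2 hrq] at hr

theorem exists_eventuallyEq_div [CompleteSpace 𝕜] {d : ℕ}
    (hf : HasPowerSeriesAtZero f (X ^ d * p)) (hg : HasPowerSeriesAtZero g (X ^ d * q))
    (hq : constantCoeff q ≠ 0) :
    ∃ φ, HasPowerSeriesAtZero φ (p * q⁻¹) ∧ ∀ᶠ z in 𝓝[≠] 0, φ z = f z / g z := by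
  obtain ⟨f', hf', hff'⟩ := hf.exists_eq_pow_mul
  obtain ⟨g', hg', hgg'⟩ := hg.exists_eq_pow_mul
  refine ⟨fun z ↦ f' z / g' z, hf'.div hg' hq, ?_⟩
  filter_upwards [nhdsWithin_le_nhds hff', nhdsWithin_le_nhds hgg', self_mem_nhdsWithin]
    with z hfz hgz hz
  rw [hfz, hgz, mul_div_mul_left _ _ (pow_ne_zero d hz)]

theorem isBigO_sub_eval {N : ℕ} {P : Polynomial 𝕜} (hf : HasPowerSeriesAtZero f p)
    (h : X ^ N ∣ p - (P : 𝕜⟦X⟧)) : (fun z ↦ f z - P.eval z) =O[𝓝 0] fun z ↦ z ^ N := by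
  have hP : HasPowerSeriesAtZero (P.eval ·) (P : 𝕜⟦X⟧) := .of_forall fun z ↦ by
    simpa [Polynomial.eval_eq_sum, Polynomial.sum_def] using
      hasSum_sum_of_ne_finset_zero (s := P.support) (f := fun n ↦ P.coeff n * z ^ n)
        fun n hn ↦ by simp [Polynomial.notMem_support_iff.1 hn]
  obtain ⟨r, hr⟩ := h
  obtain ⟨g, hg, hfg⟩ := (hr ▸ hf.sub hP).exists_eq_pow_mul
  have hg1 : g =O[𝓝 0] fun _ ↦ (1 : 𝕜) := hg.analyticAt.continuousAt.isBigO_one 𝕜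
  simpa using ((isBigO_refl (fun z : 𝕜 ↦ z ^ N) _).mul hg1).congr' (hfg.mono fun _ h ↦ h.symm)
    .rfl

theorem exists_div_isBigO [CompleteSpace 𝕜] {d N : ℕ} {P : Polynomial 𝕜}
    (hf : HasPowerSeriesAtZero f p) (hg : HasPowerSeriesAtZero g (X ^ d * q))
    (hq : constantCoeff q ≠ 0) (h : X ^ (N + d) ∣ p - X ^ d * q * (P : 𝕜⟦X⟧)) :
    ∃ φ, AnalyticAt 𝕜 φ 0 ∧ (∀ᶠ z in 𝓝[≠] 0, φ z = f z / g z) ∧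
      (fun z ↦ φ z - P.eval z) =O[𝓝 0] fun z ↦ z ^ N := by
  obtain ⟨r, hr⟩ := h
  have hp : p = X ^ d * (q * (P : 𝕜⟦X⟧) + X ^ N * r) := by
    rw [sub_eq_iff_eq_add.1 hr]
    ring
  obtain ⟨φ, hφ, hφ_eq⟩ := (hp ▸ hf).exists_eventuallyEq_div hg hq
  refine ⟨φ, hφ.analyticAt, hφ_eq, hφ.isBigO_sub_eval ⟨r * q⁻¹, ?_⟩⟩
  linear_combination (P : 𝕜⟦X⟧) * PowerSeries.mul_inv_cancel q hq

end HasPowerSeriesAtZero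

end ConvergentPowerSeries

section ExponentialSeries

/-- The power series of `ℏ ↦ e^{cℏ}`. -/
noncomputable def expSeries (c : ℝ) : ℝ⟦X⟧ :=
  rescale c (PowerSeries.exp ℝ)

/-- The power series of `ℏ ↦ 2 sinh (cℏ)`, the `ℏ`-expansion of a quantum integer before division
by `t² - t⁻²`. -/
noncomputable def twoSinhSeries (c : ℝ) : ℝ⟦X⟧ :=
  expSeries c - expSeries (-c)

theorem coeff_expSeries (c : ℝ) (k : ℕ) : coeff k (expSeries c) = c ^ k / k.factorial := by
  simp [expSeries, div_eq_mul_inv]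

theorem constantCoeff_expSeries (c : ℝ) : constantCoeff (expSeries c) = 1 := by
  simpa using coeff_expSeries c 0

theorem expSeries_zero : expSeries 0 = 1 := by
  simp [expSeries]

theorem expSeries_mul (a b : ℝ) : expSeries a * expSeries b = expSeries (a + b) :=
  exp_mul_exp_eq_exp_add a b

theorem expSeries_mul_twoSinhSeries (a b : ℝ) :
    expSeries a * twoSinhSeries b = expSeries (a + b) - expSeries (a - b) := by
  rw [twoSinhSeries, mul_sub, expSeries_mul, expSeries_mul, sub_eq_add_neg a]

theorem exists_twoSinhSeries_eq_X_mul {c : ℝ} (hc : c ≠ 0) :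
    ∃ p, twoSinhSeries c = X ^ 1 * p ∧ constantCoeff p ≠ 0 := by
  obtain ⟨p, hp⟩ : (X : ℝ⟦X⟧) ^ 1 ∣ twoSinhSeries c := by
    simp [X_dvd_iff, twoSinhSeries, constantCoeff_expSeries]
  have lead : constantCoeff p = 2 * c := by
    rw [← coeff_zero_eq_constantCoeff_apply, ← coeff_X_pow_mul p 1 0, ← hp]
    simp only [zero_add, twoSinhSeries, LinearMap.map_sub, coeff_expSeries, Nat.factorial_one,
      Nat.cast_one]
    ring
  exact ⟨p, hp, by simpa [lead] using hc⟩

theorem hasPowerSeriesAtZero_exp (c : ℝ) :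
    HasPowerSeriesAtZero (fun h ↦ Real.exp (c * h)) (expSeries c) :=
  .of_forall fun h ↦ by
    rw [Real.exp_eq_exp_ℝ]
    refine (NormedSpace.expSeries_div_hasSum_exp (c * h)).congr_fun fun k ↦ ?_
    rw [coeff_expSeries, mul_pow]
    ring

theorem hasPowerSeriesAtZero_exp_div_four_zpow (k : ℤ) :
    HasPowerSeriesAtZero (fun h ↦ Real.exp (h / 4) ^ k) (expSeries (k / 4)) := by
  refine (hasPowerSeriesAtZero_exp _).congr (.of_forall fun h ↦ ?_)
  simp only [← Real.rpow_intCast, ← Real.exp_mul]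
  ring_nf

end ExponentialSeries

section FigureEight

/-- The factor `q^m + q^{-m} - q^j - q^{-j}` of Habiro's formula, expanded at `q = e^ℏ`. -/
noncomputable def habiroFactor (m j : ℝ) : ℝ⟦X⟧ :=
  expSeries m + expSeries (-m) - expSeries j - expSeries (-j)

/-- The first `K` terms of Habiro's sum for the color `m`, expanded at `q = e^ℏ`. -/
noncomputable def habiroSum (m : ℝ) (K : ℕ) : ℝ⟦X⟧ :=
  ∑ k ∈ range K, ∏ j ∈ Icc 1 k, habiroFactor m j

theorem coeff_habiroFactor (m j : ℝ) (k : ℕ) :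
    coeff k (habiroFactor m j) = if Even k then 2 * (m ^ k - j ^ k) / k.factorial else 0 := by
  simp only [habiroFactor, map_add, map_sub, coeff_expSeries]
  split_ifs with hk
  · rw [hk.neg_pow, hk.neg_pow]
    ring
  · rw [(Nat.not_even_iff_odd.1 hk).neg_pow, (Nat.not_even_iff_odd.1 hk).neg_pow]
    ring

theorem X_sq_dvd_habiroFactor (m j : ℝ) : X ^ 2 ∣ habiroFactor m j := by
  refine X_pow_dvd_iff.2 fun d hd ↦ ?_
  interval_cases d <;> simp [-coeff_zero_eq_constantCoeff, coeff_habiroFactor]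

theorem habiroFactor_natAbs (m : ℤ) : habiroFactor m m.natAbs = 0 := by
  rcases abs_choice m with h | h <;> simp [habiroFactor, Nat.cast_natAbs, h]

theorem X_pow_dvd_habiroSum_add_sub (m : ℝ) (K L : ℕ) :
    X ^ (2 * K) ∣ habiroSum m (K + L) - habiroSum m K := by
  rw [habiroSum, habiroSum, sum_range_add_sub_sum_range]
  refine dvd_sum fun k _ ↦ ?_
  have := prod_dvd_prod_of_dvd (s := Icc 1 (K + k)) _ _ fun j _ ↦ X_sq_dvd_habiroFactor m (j : ℕ)
  rw [prod_const, Nat.card_Icc, ← pow_mul] at this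
  exact (pow_dvd_pow X (by omega)).trans this

theorem habiroSum_natAbs_add {m : ℤ} (hm : m ≠ 0) (K : ℕ) :
    habiroSum m (m.natAbs + K) = habiroSum m m.natAbs := by
  rw [habiroSum, sum_range_add, habiroSum, add_eq_left]
  refine sum_eq_zero fun k _ ↦ prod_eq_zero (i := m.natAbs) ?_ (habiroFactor_natAbs m)
  simp [Nat.one_le_iff_ne_zero, hm]

theorem X_pow_dvd_habiroSum_natAbs_sub {m : ℤ} (hm : m ≠ 0) (K : ℕ) :
    X ^ (2 * K) ∣ habiroSum m m.natAbs - habiroSum m K := by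
  rw [← habiroSum_natAbs_add hm K, add_comm]
  exact X_pow_dvd_habiroSum_add_sub m K m.natAbs

theorem hasPowerSeriesAtZero_J41 (m : ℤ) :
    HasPowerSeriesAtZero (fun h ↦ J41 (Real.exp (h / 4) ^ (4 : ℤ)) m) (habiroSum m m.natAbs) := by
  have monomial (k : ℤ) :
      HasPowerSeriesAtZero (fun h ↦ (Real.exp (h / 4) ^ (4 : ℤ)) ^ k) (expSeries k) := by
    have := hasPowerSeriesAtZero_exp_div_four_zpow (4 * k)
    simp only [zpow_mul] at this
    convert! this using 2
    push_cast
    ring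
  refine .sum _ fun k _ ↦ .prod _ fun j _ ↦ ?_
  simpa [habiroFactor] using
    (((monomial m).add (monomial (-m))).sub (monomial j)).sub (monomial (-j))

/-- The expansion of `J_{4₁,m}(e^ℏ)` modulo `ℏ⁸`, read off from the first four terms of Habiro's sum
since the term of index `k` is divisible by `ℏ^{2k}`. -/
noncomputable def figureEightExpansion (m : ℝ) : Polynomial ℝ :=
  1 + .C (m ^ 2 - 1) * .X ^ 2 + .C ((m ^ 2 - 1) * (m ^ 2 - 4) + (m ^ 4 - 1) / 12) * .X ^ 4
    + .C ((m ^ 2 - 1) * (m ^ 2 - 4) * (m ^ 2 - 9) + (m ^ 2 - 1) * (m ^ 4 - 16) / 12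
      + (m ^ 2 - 4) * (m ^ 4 - 1) / 12 + (m ^ 6 - 1) / 360) * .X ^ 6

theorem X_pow_eight_dvd_habiroSum_four_sub_figureEightExpansion (m : ℝ) :
    X ^ 8 ∣ habiroSum m 4 - (figureEightExpansion m : ℝ⟦X⟧) := by
  refine X_pow_dvd_iff.2 fun d hd ↦ ?_
  simp only [habiroSum, sum_range_succ, sum_range_zero, prod_Icc_succ_top (Nat.le_add_left 1 _),
    Icc_eq_empty_of_lt zero_lt_one, prod_empty, one_mul, zero_add, figureEightExpansion,
    LinearMap.map_add, LinearMap.map_sub, coeff_mul, coeff_one, coeff_habiroFactor, Nat.even_iff,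
    Nat.sum_antidiagonal_eq_sum_range_succ_mk, Polynomial.coeff_coe, Polynomial.coeff_add,
    Polynomial.coeff_C_mul, Polynomial.coeff_X_pow, Polynomial.coeff_one]
  interval_cases d <;> norm_num [sum_range_succ, Nat.factorial] <;> ring

theorem X_pow_eight_dvd_habiroSum_natAbs_sub_figureEightExpansion {m : ℤ} (hm : m ≠ 0) :
    X ^ 8 ∣ habiroSum m m.natAbs - (figureEightExpansion m : ℝ⟦X⟧) := by
  simpa only [sub_add_sub_cancel] using dvd_add (X_pow_dvd_habiroSum_natAbs_sub hm 4)
    (X_pow_eight_dvd_habiroSum_four_sub_figureEightExpansion m)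

end FigureEight

section Cable

/-- The numerator `(t² - t⁻²) J̃_{K,n}(t)` of the cabling formula. -/
noncomputable def cableNumerator (r s n : ℤ) (t : ℝ) : ℝ :=
  t ^ (-(r * s * (n ^ 2 - 1))) *
    ∑ j ∈ range n.toNat,
      t ^ (r * s * (2 * (j : ℤ) - (n - 1)) ^ 2 + 2 * r * (2 * (j : ℤ) - (n - 1))) *
        (t ^ (2 * (s * (2 * (j : ℤ) - (n - 1)) + 1)) -
          t ^ (-(2 * (s * (2 * (j : ℤ) - (n - 1)) + 1)))) *
        J41 (t ^ (4 : ℤ)) (s * (2 * (j : ℤ) - (n - 1)) + 1)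

theorem JtildeCable_eq_div (r s n : ℤ) (t : ℝ) :
    JtildeCable r s t n = cableNumerator r s n t / (t ^ (2 : ℤ) - t ^ (-2 : ℤ)) := by
  rw [JtildeCable, cableNumerator, mul_div_assoc, sum_div]
  congr! 2
  rw [Jtilde41]
  ring

theorem zpow_sub_zpow_neg_ne_zero {t : ℝ} (ht : 0 < t) (ht1 : t ≠ 1) {m : ℤ} (hm : m ≠ 0) :
    t ^ m - t ^ (-m) ≠ 0 := by
  rw [sub_ne_zero]
  exact (zpow_right_injective₀ ht ht1).ne (by omega)

theorem JCable_eq_div {h : ℝ} (hh : h ≠ 0) (r s n : ℤ) :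
    JCable r s n h = cableNumerator r s n (Real.exp (h / 4)) /
      (Real.exp (h / 4) ^ (2 * n) - Real.exp (h / 4) ^ (-(2 * n))) := by
  rw [JCable, JtildeCable_eq_div, JtildeU, div_div_div_cancel_right₀]
  exact zpow_sub_zpow_neg_ne_zero (Real.exp_pos _) (by simpa using hh) two_ne_zero

/-- The expansion of `t² - t⁻²` times the summand of the cabling formula with `u = 2w`, where `J`
stands for the expansion of the normalized colored Jones polynomial of `4₁` with color `su + 1`. -/
noncomputable def cableSummand (r s u : ℝ) (J : ℝ⟦X⟧) : ℝ⟦X⟧ :=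
  expSeries ((r * s * u ^ 2 + 2 * r * u) / 4) * twoSinhSeries ((s * u + 1) / 2) * J

theorem dvd_cableSummand_sub {a J J' : ℝ⟦X⟧} (h : a ∣ J - J') (r s u : ℝ) :
    a ∣ cableSummand r s u J - cableSummand r s u J' := by
  rw [cableSummand, cableSummand, ← mul_sub]
  exact h.mul_left _

/-- The expansion of `cableNumerator r s n (e^{ℏ/4})`. -/
noncomputable def cableNumeratorSeries (r s n : ℤ) : ℝ⟦X⟧ :=
  expSeries (-(r * s * (n ^ 2 - 1)) / 4) *
    ∑ j ∈ range n.toNat, cableSummand r s ((2 * (j : ℤ) - (n - 1) : ℤ) : ℝ)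
      (habiroSum ((s * (2 * (j : ℤ) - (n - 1)) + 1 : ℤ) : ℝ)
        (s * (2 * (j : ℤ) - (n - 1)) + 1).natAbs)

theorem hasPowerSeriesAtZero_zpow_sub_zpow_neg (m : ℤ) :
    HasPowerSeriesAtZero (fun h ↦ Real.exp (h / 4) ^ (2 * m) - Real.exp (h / 4) ^ (-(2 * m)))
      (twoSinhSeries (m / 2)) := by
  convert! (hasPowerSeriesAtZero_exp_div_four_zpow (2 * m)).sub
    (hasPowerSeriesAtZero_exp_div_four_zpow (-(2 * m))) using 1
  rw [twoSinhSeries]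
  push_cast
  ring_nf

theorem hasPowerSeriesAtZero_cableNumerator (r s n : ℤ) :
    HasPowerSeriesAtZero (fun h ↦ cableNumerator r s n (Real.exp (h / 4)))
      (cableNumeratorSeries r s n) := by
  have framing := hasPowerSeriesAtZero_exp_div_four_zpow (-(r * s * (n ^ 2 - 1)))
  push_cast at framing
  refine framing.mul (.sum _ fun j _ ↦ ?_)
  generalize 2 * (j : ℤ) - (n - 1) = u
  have twist := hasPowerSeriesAtZero_exp_div_four_zpow (r * s * u ^ 2 + 2 * r * u)
  have bracket := hasPowerSeriesAtZero_zpow_sub_zpow_neg (s * u + 1)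
  push_cast at twist bracket
  exact (twist.mul bracket).mul (hasPowerSeriesAtZero_J41 (s * u + 1))

theorem exists_analyticAt_eq_JCable {r s n : ℤ} (hn : n ≠ 0) {N : ℕ} {P : Polynomial ℝ}
    (h : X ^ (N + 1) ∣ cableNumeratorSeries r s n - twoSinhSeries (n / 2) * (P : ℝ⟦X⟧)) :
    ∃ g : ℝ → ℝ, AnalyticAt ℝ g 0 ∧ (∀ᶠ h in 𝓝[≠] 0, g h = JCable r s n h) ∧
      (fun h ↦ g h - P.eval h) =O[𝓝 0] fun h ↦ h ^ N := by
  obtain ⟨q, hq, hq0⟩ := exists_twoSinhSeries_eq_X_mul (c := (n : ℝ) / 2) (by simpa using hn)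
  obtain ⟨g, analytic, eq_div, isBigO⟩ :=
    (hasPowerSeriesAtZero_cableNumerator r s n).exists_div_isBigO
      (hq ▸ hasPowerSeriesAtZero_zpow_sub_zpow_neg n) hq0 (hq ▸ h)
  refine ⟨g, analytic, ?_, isBigO⟩
  filter_upwards [eq_div, self_mem_nhdsWithin] with h hgh hh
  rw [hgh, JCable_eq_div hh]

end Cable

section CableThirteenThree

theorem sum_range_two_mul_sub {M : Type*} [AddCommMonoid M] {T : ℤ → M} {F : ℕ → M}
    (zero : F 0 = 0) (one : F 1 = T 0)
    (add_two : ∀ n : ℕ, F (n + 2) = F n + (T (-(n + 1)) + T (n + 1))) (n : ℕ) :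
    ∑ j ∈ range n, T (2 * j - (n - 1)) = F n := by
  induction n using Nat.twoStepInduction with
  | zero => simp only [range_zero, sum_empty, zero]
  | one => simp [one]
  | more n ih _ =>
    have lowest : (2 * (0 : ℕ) - ((n + 2 : ℕ) - 1) : ℤ) = -(n + 1) := by omega
    have inner (j : ℕ) : (2 * (j + 1 : ℕ) - ((n + 2 : ℕ) - 1) : ℤ) = 2 * j - (n - 1) := by omega
    have highest : (2 * n - (n - 1) : ℤ) = n + 1 := by ring
    rw [sum_range_succ, sum_range_succ', add_two, ← ih, ← add_assoc]
    simp only [lowest, inner, highest]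

/-- The polynomial `∑_{k ≤ 6} P_k(n) ℏ^k` approximating `J_{K,n}(e^ℏ)` for `K = C_{(13,3)}(4₁)`. -/
noncomputable def cableExpansion (n : ℝ) : Polynomial ℝ :=
  1 + .C (47 - 47 * n ^ 2) * .X ^ 2 + .C (-624 + 624 * n ^ 2) * .X ^ 3
    + .C (151919 / 12 - 14605 * n ^ 2 + 23341 / 12 * n ^ 4) * .X ^ 4
    + .C (-294528 + 361088 * n ^ 2 - 66560 * n ^ 4) * .X ^ 5
    + .C (2864712407 / 360 - 122607733 / 12 * n ^ 2 + 28027787 / 12 * n ^ 4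
        - 27314027 / 360 * n ^ 6) * .X ^ 6

/-- The expansion of `(t² - t⁻²) ∑_w t^{52w(3w+1)} J̃_{4₁,6w+1}(t)` predicted by `cableExpansion n`;
the framing factor `t^{-39(n²-1)}` of the cabling formula has been moved to this side. -/
noncomputable def cableSumExpansion (n : ℝ) : ℝ⟦X⟧ :=
  expSeries (39 * (n ^ 2 - 1) / 4) * twoSinhSeries (n / 2) * (cableExpansion n : ℝ⟦X⟧)

/-- The expansion modulo `ℏ⁸` of `t² - t⁻²` times the summand of the cabling formula with
`u = 2w`. -/
noncomputable def cableSummandExpansion (u : ℝ) : ℝ⟦X⟧ :=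
  cableSummand 13 3 u (figureEightExpansion (3 * u + 1))

set_option maxHeartbeats 800000 in
-- `ring` has to expand polynomial identities of degree up to 14 in `n`.
theorem coeff_cableSumExpansion_add_two {d : ℕ} (hd : d < 8) (n : ℝ) :
    coeff d (cableSumExpansion (n + 2)) = coeff d (cableSumExpansion n) +
      (coeff d (cableSummandExpansion (-(n + 1))) + coeff d (cableSummandExpansion (n + 1))) := by
  simp only [cableSumExpansion, cableSummandExpansion, cableSummand, expSeries_mul_twoSinhSeries,
    coeff_mul, Nat.sum_antidiagonal_eq_sum_range_succ_mk, LinearMap.map_sub, coeff_expSeries,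
    cableExpansion, figureEightExpansion, Polynomial.coeff_coe, Polynomial.coeff_add,
    Polynomial.coeff_C_mul, Polynomial.coeff_X_pow, Polynomial.coeff_one]
  interval_cases d <;> norm_num [sum_range_succ, Nat.factorial] <;> ring

theorem cableSumExpansion_zero : cableSumExpansion 0 = 0 := by
  simp [cableSumExpansion, twoSinhSeries]

theorem cableSumExpansion_one : cableSumExpansion 1 = cableSummandExpansion 0 := by
  have cable : cableExpansion 1 = 1 := by norm_num [cableExpansion]
  have figureEight : figureEightExpansion 1 = 1 := by norm_num [figureEightExpansion]
  simp [cableSumExpansion, cableSummandExpansion, cableSummand, cable, figureEight]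

theorem X_pow_eight_dvd_sum_cableSummandExpansion_sub (n : ℕ) :
    X ^ 8 ∣ ∑ j ∈ range n, cableSummandExpansion ((2 * (j : ℤ) - (n - 1) : ℤ) : ℝ) -
      cableSumExpansion n := by
  refine X_pow_dvd_iff.2 fun d hd ↦ ?_
  rw [map_sub, map_sum, sub_eq_zero]
  refine sum_range_two_mul_sub (T := fun u ↦ coeff d (cableSummandExpansion u))
    (F := fun n ↦ coeff d (cableSumExpansion n)) ?_ ?_ (fun m ↦ ?_) n
  · simp [cableSumExpansion_zero]
  · simp [cableSumExpansion_one]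
  · simpa using coeff_cableSumExpansion_add_two hd m

theorem X_pow_eight_dvd_cableNumeratorSeries_sub (n : ℕ) :
    X ^ 8 ∣ cableNumeratorSeries 13 3 n - twoSinhSeries (n / 2) * (cableExpansion n : ℝ⟦X⟧) := by
  have summand (u : ℤ) :
      X ^ 8 ∣ cableSummand 13 3 u (habiroSum ((3 * u + 1 : ℤ) : ℝ) (3 * u + 1).natAbs) -
        cableSummandExpansion u := by
    have habiro :=
      X_pow_eight_dvd_habiroSum_natAbs_sub_figureEightExpansion (m := 3 * u + 1) (by omega)
    simpa [cableSummandExpansion] using dvd_cableSummand_sub habiro 13 3 u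
  have cable_sum := dvd_add (dvd_sum fun j (_ : j ∈ range n) ↦ summand (2 * (j : ℤ) - (n - 1)))
    (X_pow_eight_dvd_sum_cableSummandExpansion_sub n)
  rw [sum_sub_distrib, sub_add_sub_cancel] at cable_sum
  have framing : expSeries (-(39 * (n ^ 2 - 1)) / 4) * cableSumExpansion n =
      twoSinhSeries (n / 2) * (cableExpansion n : ℝ⟦X⟧) := by
    rw [cableSumExpansion, ← mul_assoc, ← mul_assoc, expSeries_mul, neg_div, neg_add_cancel,
      expSeries_zero, one_mul]
  convert! cable_sum.mul_left (expSeries (-(39 * (n ^ 2 - 1)) / 4)) using 1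
  rw [mul_sub, framing]
  norm_num [cableNumeratorSeries]

end CableThirteenThree

/-- For `K = C_{(13,3)}(4₁)` and every integer `n ≥ 1`, the function `ℏ ↦ J_{K,n}(e^ℏ)`
(defined for small `ℏ ≠ 0` by the quotient `J̃_{K,n}(e^{ℏ/4})/J̃_{U,n}(e^{ℏ/4})` and extended
real-analytically across `ℏ = 0`) has Taylor expansion at `ℏ = 0` given by
`1 + (47 − 47n²)ℏ² + (−624 + 624n²)ℏ³ + (151919/12 − 14605n² + (23341/12)n⁴)ℏ⁴
 + (−294528 + 361088n² − 66560n⁴)ℏ⁵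
 + (2864712407/360 − (122607733/12)n² + (28027787/12)n⁴ − (27314027/360)n⁶)ℏ⁶ + O(ℏ⁷)`. -/
theorem hbar_expansion_cable_13_3 (n : ℤ) (hn : 1 ≤ n) :
    ∃ g : ℝ → ℝ, AnalyticAt ℝ g 0 ∧
      (∀ᶠ h in nhdsWithin (0 : ℝ) {0}ᶜ, g h = JCable 13 3 n h) ∧
      (fun h : ℝ => g h -
        (1 + (47 - 47 * (n : ℝ) ^ 2) * h ^ 2 + (-624 + 624 * (n : ℝ) ^ 2) * h ^ 3
          + (151919 / 12 - 14605 * (n : ℝ) ^ 2 + 23341 / 12 * (n : ℝ) ^ 4) * h ^ 4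
          + (-294528 + 361088 * (n : ℝ) ^ 2 - 66560 * (n : ℝ) ^ 4) * h ^ 5
          + (2864712407 / 360 - 122607733 / 12 * (n : ℝ) ^ 2 + 28027787 / 12 * (n : ℝ) ^ 4
            - 27314027 / 360 * (n : ℝ) ^ 6) * h ^ 6))
        =O[nhds (0 : ℝ)] (fun h => h ^ 7) := by
  lift n to ℕ using by omega
  obtain ⟨g, analytic, eq_JCable, isBigO⟩ := exists_analyticAt_eq_JCable (by omega)
    (X_pow_eight_dvd_cableNumeratorSeries_sub n)
  refine ⟨g, analytic, eq_JCable, isBigO.congr_left fun h ↦ ?_⟩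
  simp [cableExpansion]
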